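/- arXiv:2510.16277 — 2 statements merged into one kernel-verified Lean document; each statement's English description precedes it below -/
import Mathlib

section
/- Let q be a real number with q > 1 and let m ≥ 1 be an integer. Then the sum, over all integer partitions λ of 2m+1 in which every even part occurs with even multiplicity, of (1 - q^{-λ'_1}) / ( q^{( Σ_i (λ'_i)^2 - o(λ) )/2} · Π_i (1/q^2; 1/q^2)_{⌊m_i(λ)/2⌋} ) equals 1/( q^m (1/q^2; 1/q^2)_m ) + (1/q^{m+1}) · Σ_{i=0}^{m} (-1)^{i-1} / ( q^{i(i+1)} (1/q^2; 1/q^2)_{m-i} ). -/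
/-- The q-Pochhammer symbol `(a; Q)_n = ∏_{j=0}^{n-1} (1 - a Q^j)` over the reals. -/
noncomputable def qPoch (a Q : ℝ) (n : ℕ) : ℝ := ∏ j ∈ Finset.range n, (1 - a * Q ^ j)

/-- `λ'_i`, the size of the `i`-th column of the Young diagram of `λ`, i.e. the number of
parts of `λ` of size at least `i` (equivalently `∑_{j ≥ i} m_j(λ)`). -/
def colLen {n : ℕ} (lam : Nat.Partition n) (i : ℕ) : ℕ :=
  (lam.parts.filter (fun j => i ≤ j)).card

/-- `o(λ)`, the number of odd parts of `λ`. -/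
def numOddParts {n : ℕ} (lam : Nat.Partition n) : ℕ :=
  (lam.parts.filter (fun j => Odd j)).card

/-!
Write `Q = q⁻²`. Deleting the first column of a partition `λ` leaves a partition of `|λ| - λ'₁`
with at most `λ'₁` parts and turns odd parts into even ones. The summand, without its factor
`1 - q ^ (-λ'₁)`, is a product of contributions of the columns, so summing it over the partitions
of `n` with `k` parts gives a quantity that satisfies a recursion in `n` and `k`. The recursion
alternates between the condition on even parts (orthogonal) and the condition on odd parts
(symplectic). Guessing closed forms for both, proportional to Gaussian binomial coefficients, each
induction step reduces to the `q`-Vandermonde identity. For odd `n` the number of parts is odd, and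
the theorem becomes a statement about two sums `∑ Q ^ (a ^ 2) [m, a] / (Q; Q)_a` and
`∑ Q ^ (a * (a + 1)) [m, a] / (Q; Q)_a`. The first equals `1 / (Q; Q)_m`, and the second satisfies
the same first-order recursion in `m` as the alternating sum in the theorem.
-/

open Finset

lemma sum_range_two_mul {M : Type*} [AddCommMonoid M] (f : ℕ → M) (n : ℕ) :
    ∑ j ∈ range (2 * n), f j = ∑ i ∈ range n, (f (2 * i) + f (2 * i + 1)) := by
  induction n with
  | zero => simp
  | succ n ih => rw [mul_add_one, sum_range_succ, sum_range_succ, sum_range_succ, ih, add_assoc]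

section GaussBinom

variable {R : Type*} [CommSemiring R]

/-- The Gaussian binomial coefficient `[n, k]_Q`, defined by the Pascal rule so that no division
is needed; it is zero for `k > n`. -/
def gaussBinom (Q : R) : ℕ → ℕ → R
  | _, 0 => 1
  | 0, _ + 1 => 0
  | n + 1, k + 1 => gaussBinom Q n k + Q ^ (k + 1) * gaussBinom Q n (k + 1)

@[simp]
lemma gaussBinom_zero_right (Q : R) (n : ℕ) : gaussBinom Q n 0 = 1 := by
  cases n <;> rw [gaussBinom]

@[simp]
lemma gaussBinom_zero_succ (Q : R) (k : ℕ) : gaussBinom Q 0 (k + 1) = 0 := by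
  rw [gaussBinom]

lemma gaussBinom_succ_succ (Q : R) (n k : ℕ) :
    gaussBinom Q (n + 1) (k + 1) = gaussBinom Q n k + Q ^ (k + 1) * gaussBinom Q n (k + 1) := by
  rw [gaussBinom]

lemma gaussBinom_eq_zero_of_lt (Q : R) {n k : ℕ} (h : n < k) : gaussBinom Q n k = 0 := by
  induction n generalizing k with
  | zero => obtain ⟨k, rfl⟩ := Nat.exists_eq_add_one.2 h; simp
  | succ n ih =>
    obtain ⟨k, rfl⟩ := Nat.exists_eq_add_one.2 (Nat.zero_lt_of_lt h)
    rw [gaussBinom_succ_succ, ih (by lia), ih (by lia), mul_zero, add_zero]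

@[simp]
lemma gaussBinom_self (Q : R) (n : ℕ) : gaussBinom Q n n = 1 := by
  induction n with
  | zero => simp
  | succ n ih => rw [gaussBinom_succ_succ, ih, gaussBinom_eq_zero_of_lt Q n.lt_succ_self]; simp

-- Truncated subtraction is harmless: for `n < k` both sides vanish.
lemma gaussBinom_succ_succ' (Q : R) (n k : ℕ) :
    gaussBinom Q (n + 1) (k + 1) = gaussBinom Q n (k + 1) + Q ^ (n - k) * gaussBinom Q n k := by
  induction n generalizing k with
  | zero => cases k <;> simp [gaussBinom_succ_succ]
  | succ n ih =>
    cases k with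
    | zero =>
      have h := ih 0
      simp only [gaussBinom_succ_succ Q _ 0, gaussBinom_zero_right, zero_add, pow_one,
        tsub_zero, mul_one] at h ⊢
      rw [h, pow_succ', mul_add, ← add_assoc, h]
    | succ k =>
      have hpow : Q ^ (k + 2) * (Q ^ (n - (k + 1)) * gaussBinom Q n (k + 1)) =
          Q ^ (n - k) * (Q ^ (k + 1) * gaussBinom Q n (k + 1)) := by
        rcases le_or_gt (k + 1) n with h | h
        · rw [← mul_assoc, ← mul_assoc, ← pow_add, ← pow_add]
          congr 2
          lia
        · simp [gaussBinom_eq_zero_of_lt Q h]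
      calc gaussBinom Q (n + 2) (k + 2)
        _ = (gaussBinom Q n (k + 1) + Q ^ (n - k) * gaussBinom Q n k) + Q ^ (k + 2) *
            (gaussBinom Q n (k + 2) + Q ^ (n - (k + 1)) * gaussBinom Q n (k + 1)) := by
          rw [gaussBinom_succ_succ, ih, ih]
        _ = (gaussBinom Q n (k + 1) + Q ^ (k + 2) * gaussBinom Q n (k + 2)) +
            Q ^ (n - k) * (gaussBinom Q n k + Q ^ (k + 1) * gaussBinom Q n (k + 1)) := by
          rw [mul_add, hpow]; ring
        _ = gaussBinom Q (n + 1) (k + 2) +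
            Q ^ (n + 1 - (k + 1)) * gaussBinom Q (n + 1) (k + 1) := by
          rw [← gaussBinom_succ_succ, ← gaussBinom_succ_succ, Nat.add_sub_add_right]

/-- The `q`-Vandermonde identity. -/
theorem gaussBinom_add (Q : R) (m n k : ℕ) :
    gaussBinom Q (m + n) k = ∑ p ∈ antidiagonal k,
      Q ^ (p.1 * (n - p.2)) * gaussBinom Q m p.1 * gaussBinom Q n p.2 := by
  induction m generalizing k with
  | zero =>
    cases k with
    | zero => simp
    | succ k => simp [Nat.sum_antidiagonal_succ]
  | succ m ih =>
    cases k with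
    | zero => simp
    | succ k =>
      have hterm : ∀ p ∈ antidiagonal k,
          Q ^ ((p.1 + 1) * (n - p.2)) * gaussBinom Q (m + 1) (p.1 + 1) * gaussBinom Q n p.2 =
          Q ^ ((p.1 + 1) * (n - p.2)) * gaussBinom Q m (p.1 + 1) * gaussBinom Q n p.2 +
          Q ^ (m + n - k) *
            (Q ^ (p.1 * (n - p.2)) * gaussBinom Q m p.1 * gaussBinom Q n p.2) := by
        intro p hp
        rcases lt_or_ge m p.1 with hm | hm
        · simp [gaussBinom_succ_succ', gaussBinom_eq_zero_of_lt Q hm]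
        rcases lt_or_ge n p.2 with hn | hn
        · simp [gaussBinom_eq_zero_of_lt Q hn]
        rw [show m + n - k = (m - p.1) + (n - p.2) by have := mem_antidiagonal.1 hp; lia,
          gaussBinom_succ_succ']
        ring
      rw [add_right_comm, gaussBinom_succ_succ', ih, ih, Nat.sum_antidiagonal_succ,
        Nat.sum_antidiagonal_succ, sum_congr rfl hterm, sum_add_distrib, mul_sum]
      simp [add_assoc]

lemma sum_mul_gaussBinom_succ (Q : R) (f : ℕ → R) (n : ℕ) :
    ∑ k ∈ range (n + 2), f k * gaussBinom Q (n + 1) k =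
      ∑ k ∈ range (n + 1), f k * gaussBinom Q n k +
        ∑ k ∈ range (n + 1), f (k + 1) * (Q ^ (n - k) * gaussBinom Q n k) := by
  have hlast : ∑ k ∈ range (n + 1), f k * gaussBinom Q n k =
      ∑ k ∈ range (n + 2), f k * gaussBinom Q n k := by
    rw [sum_range_succ _ (n + 1), gaussBinom_eq_zero_of_lt Q n.lt_succ_self, mul_zero, add_zero]
  rw [hlast, sum_range_succ', sum_range_succ' _ (n + 1)]
  simp only [gaussBinom_succ_succ', mul_add, sum_add_distrib, gaussBinom_zero_right]
  exact add_right_comm _ _ _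

end GaussBinom

section QPochSelf

/-- The `q`-Pochhammer symbol `(Q; Q)_n`, over any commutative ring. -/
def qPochSelf {R : Type*} [CommRing R] (Q : R) (n : ℕ) : R := ∏ j ∈ range n, (1 - Q ^ (j + 1))

lemma qPoch_self (Q : ℝ) (n : ℕ) : qPoch Q Q n = qPochSelf Q n := by
  simp only [qPoch, qPochSelf, pow_succ']

@[simp]
lemma qPochSelf_zero {R : Type*} [CommRing R] (Q : R) : qPochSelf Q 0 = 1 := by
  simp [qPochSelf]

lemma qPochSelf_succ {R : Type*} [CommRing R] (Q : R) (n : ℕ) :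
    qPochSelf Q (n + 1) = qPochSelf Q n * (1 - Q ^ (n + 1)) :=
  prod_range_succ _ _

lemma gaussBinom_mul_qPochSelf {R : Type*} [CommRing R] (Q : R) (n k : ℕ) :
    gaussBinom Q (n + k) k * (qPochSelf Q n * qPochSelf Q k) = qPochSelf Q (n + k) := by
  induction n generalizing k with
  | zero => simp
  | succ n ihn =>
    induction k with
    | zero => simp
    | succ k ihk =>
      have hn := ihn (k + 1)
      rw [show n + (k + 1) = n + 1 + k by ring] at hn
      rw [← add_assoc, gaussBinom_succ_succ, qPochSelf_succ Q (n + 1 + k), ← ihk]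
      rw [← ihk] at hn
      simp only [qPochSelf_succ] at hn ⊢
      linear_combination (1 - Q ^ (n + 1)) * Q ^ (k + 1) * hn

lemma pow_sub_pow_mul_gaussBinom_succ {R : Type*} [CommRing R] (Q : R) (n k : ℕ) :
    (Q ^ k - Q ^ (n + 1)) * gaussBinom Q (n + 1) k =
      Q ^ k * (1 - Q ^ (n + 1)) * gaussBinom Q n k := by
  cases k with
  | zero => simp
  | succ k =>
    rcases lt_or_ge n k with h | h
    · simp [gaussBinom_eq_zero_of_lt Q h, gaussBinom_eq_zero_of_lt Q (h.trans k.lt_succ_self),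
        gaussBinom_succ_succ]
    · have hpow : Q ^ (n + 1) = Q ^ (k + 1) * Q ^ (n - k) := by rw [← pow_add]; congr 1; lia
      have h₁ := gaussBinom_succ_succ Q n k
      have h₂ := gaussBinom_succ_succ' Q n k
      linear_combination Q ^ (k + 1) * h₂ - Q ^ (n + 1) * h₁ - gaussBinom Q n k * hpow

variable {K : Type*} [Field K] {Q : K}

lemma one_sub_pow_succ_ne_zero (hQ : ¬IsOfFinOrder Q) (n : ℕ) : 1 - Q ^ (n + 1) ≠ 0 := fun h =>
  hQ (isOfFinOrder_iff_pow_eq_one.2 ⟨n + 1, n.succ_pos, (sub_eq_zero.1 h).symm⟩)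

lemma qPochSelf_ne_zero (hQ : ¬IsOfFinOrder Q) (n : ℕ) : qPochSelf Q n ≠ 0 :=
  prod_ne_zero_iff.2 fun j _ => one_sub_pow_succ_ne_zero hQ j

lemma sum_gaussBinom_div_qPochSelf_mul (hQ : ¬IsOfFinOrder Q) (n a s : ℕ) :
    ∑ b ∈ range (a + 1),
        Q ^ (b * (b + s)) * gaussBinom Q n b / (qPochSelf Q (b + s) * qPochSelf Q (a - b)) =
      gaussBinom Q (n + a + s) a / qPochSelf Q (a + s) := by
  rw [add_assoc, gaussBinom_add, Nat.sum_antidiagonal_eq_sum_range_succ_mk, sum_div]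
  refine sum_congr rfl fun b hb => ?_
  have hab : b + s + (a - b) = a + s := by have := mem_range.1 hb; lia
  have h := gaussBinom_mul_qPochSelf Q (b + s) (a - b)
  rw [hab] at h
  rw [← h, show a + s - (a - b) = b + s by lia]
  have hbinom : gaussBinom Q (a + s) (a - b) ≠ 0 :=
    left_ne_zero_of_mul (h ▸ qPochSelf_ne_zero hQ (a + s))
  have := qPochSelf_ne_zero hQ (b + s)
  have := qPochSelf_ne_zero hQ (a - b)
  field_simp

lemma sum_gaussBinom_div_qPochSelf (hQ : ¬IsOfFinOrder Q) (n s : ℕ) :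
    ∑ b ∈ range (n + 1), Q ^ (b * (b + s)) / qPochSelf Q (b + s) * gaussBinom Q n b =
      1 / qPochSelf Q (n + s) := by
  induction n generalizing s with
  | zero => simp
  | succ n ih =>
    have hshift : ∀ b ∈ range (n + 1),
        Q ^ ((b + 1) * (b + 1 + s)) / qPochSelf Q (b + 1 + s) *
            (Q ^ (n - b) * gaussBinom Q n b) =
          Q ^ (n + s + 1) *
            (Q ^ (b * (b + (s + 1))) / qPochSelf Q (b + (s + 1)) * gaussBinom Q n b) := by
      intro b hb
      obtain ⟨c, rfl⟩ := Nat.exists_eq_add_of_le (Nat.lt_succ_iff.1 (mem_range.1 hb))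
      rw [Nat.add_sub_cancel_left, show b + 1 + s = b + (s + 1) by ring]
      ring
    rw [sum_mul_gaussBinom_succ, ih, sum_congr rfl hshift, ← mul_sum, ih,
      show n + 1 + s = n + s + 1 by ring, show n + (s + 1) = n + s + 1 by ring, qPochSelf_succ]
    have := qPochSelf_ne_zero hQ (n + s)
    have := one_sub_pow_succ_ne_zero hQ (n + s)
    field_simp
    ring

lemma one_div_qPochSelf_succ_sub (hQ : ¬IsOfFinOrder Q) (n : ℕ) :
    1 / qPochSelf Q (n + 1) - 1 / qPochSelf Q n = Q ^ (n + 1) / qPochSelf Q (n + 1) := by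
  have := qPochSelf_ne_zero hQ n
  have := one_sub_pow_succ_ne_zero hQ n
  rw [qPochSelf_succ]
  field_simp
  ring

/-- The alternating sum `∑ (-1)^i Q^{i(i+1)/2} / (Q; Q)_{n-i}` of the right-hand side. -/
def alternatingQSum (Q : K) (n : ℕ) : K :=
  ∑ i ∈ range (n + 1), (-1) ^ i * Q ^ (i + 1).choose 2 / qPochSelf Q (n - i)

lemma alternatingQSum_succ (hQ : ¬IsOfFinOrder Q) (n : ℕ) :
    alternatingQSum Q (n + 1) =
      (1 - Q ^ (n + 1)) * alternatingQSum Q n + Q ^ (n + 1) / qPochSelf Q (n + 1) := by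
  have hdiff : alternatingQSum Q (n + 1) - alternatingQSum Q n =
      ∑ i ∈ range (n + 2),
        (-1) ^ i * Q ^ (i + 1).choose 2 * Q ^ (n + 1 - i) / qPochSelf Q (n + 1 - i) := by
    rw [alternatingQSum, alternatingQSum, sum_range_succ, sum_range_succ _ (n + 1),
      add_sub_right_comm, ← sum_sub_distrib]
    congr 1
    · refine sum_congr rfl fun i hi => ?_
      rw [Nat.sub_add_comm (Nat.lt_succ_iff.1 (mem_range.1 hi)), mul_div_assoc _ (Q ^ (_ + 1)),
        ← one_div_qPochSelf_succ_sub hQ]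
      ring
    · simp
  have hshift : ∀ i ∈ range (n + 1),
      (-1) ^ (i + 1) * Q ^ (i + 2).choose 2 * Q ^ (n + 1 - (i + 1)) /
          qPochSelf Q (n + 1 - (i + 1)) =
        -Q ^ (n + 1) * ((-1) ^ i * Q ^ (i + 1).choose 2 / qPochSelf Q (n - i)) := by
    intro i hi
    obtain ⟨j, rfl⟩ := Nat.exists_eq_add_of_le (Nat.lt_succ_iff.1 (mem_range.1 hi))
    rw [Nat.add_sub_add_right, Nat.add_sub_cancel_left, Nat.choose_succ_succ' (i + 1),
      Nat.choose_one_right]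
    ring
  rw [sum_range_succ', sum_congr rfl hshift, ← mul_sum, ← alternatingQSum] at hdiff
  simp only [pow_zero, zero_add, tsub_zero, Nat.choose_succ_self, one_mul] at hdiff
  linear_combination hdiff

lemma sum_gaussBinom_div_qPochSelf_eq_alternatingQSum (hQ : ¬IsOfFinOrder Q) (n : ℕ) :
    ∑ b ∈ range (n + 1), Q ^ (b * (b + 1)) / qPochSelf Q b * gaussBinom Q n b =
      alternatingQSum Q n := by
  induction n with
  | zero => simp [alternatingQSum]
  | succ n ih =>
    have hlast : alternatingQSum Q n =
        ∑ b ∈ range (n + 2), Q ^ (b * (b + 1)) / qPochSelf Q b * gaussBinom Q n b := by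
      rw [sum_range_succ, gaussBinom_eq_zero_of_lt Q n.lt_succ_self, mul_zero, add_zero, ih]
    have hsum := sum_gaussBinom_div_qPochSelf hQ (n + 1) 0
    simp only [add_zero] at hsum
    rw [alternatingQSum_succ hQ, hlast, div_eq_mul_one_div, ← hsum, mul_sum, mul_sum,
      ← sum_add_distrib]
    refine sum_congr rfl fun b _ => ?_
    linear_combination Q ^ (b * b) / qPochSelf Q b * pow_sub_pow_mul_gaussBinom_succ Q n b

end QPochSelf

@[to_additive]
lemma prod_Icc_eq_prod_range_succ {M : Type*} [CommMonoid M] (f : ℕ → M) (n : ℕ) :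
    ∏ i ∈ Icc 1 n, f i = ∏ i ∈ range n, f (i + 1) := by
  rw [range_eq_Ico, prod_Ico_add', zero_add, Ico_add_one_right_eq_Icc]

section Columns

variable {n : ℕ} (lam : n.Partition)

lemma colLen_one : colLen lam 1 = lam.parts.card := by
  rw [colLen, Multiset.filter_eq_self.2]
  exact fun _ hi => lam.parts_pos hi

lemma colLen_eq_zero {i : ℕ} (h : n < i) : colLen lam i = 0 := by
  rw [colLen, Multiset.card_eq_zero, Multiset.filter_eq_nil]
  exact fun j hj => not_le.2 ((lam.le_of_mem_parts hj).trans_lt h)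

lemma count_parts_eq_zero {i : ℕ} (h : n < i) : lam.parts.count i = 0 :=
  Multiset.count_eq_zero.2 fun hi => (lam.le_of_mem_parts hi).not_gt h

lemma card_parts_le : lam.parts.card ≤ n := by
  simpa [lam.parts_sum] using Multiset.card_nsmul_le_sum (a := 1) fun _ hi => lam.parts_pos hi

lemma map_add_one_map_sub_one_parts : (lam.parts.map (· - 1)).map (· + 1) = lam.parts := by
  rw [Multiset.map_map]
  exact (Multiset.map_congr rfl fun i hi => Nat.sub_add_cancel (lam.parts_pos hi)).trans
    (Multiset.map_id _)

lemma even_add_card_parts (h : ∀ i, Even i → Even (lam.parts.count i)) :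
    Even (n + lam.parts.card) := by
  have hsum : n + lam.parts.card = (lam.parts.map (· + 1)).sum := by
    simp [Multiset.sum_map_add, lam.parts_sum]
  rw [hsum, sum_multiset_map_count]
  refine Finset.even_sum _ fun i _ => ?_
  rw [smul_eq_mul, Nat.even_mul, Nat.even_add_one]
  exact or_iff_not_imp_right.2 fun hi => h i (not_not.1 hi)

lemma sum_neg_one_pow_mul_card_filter_le {s : Multiset ℕ} (hs : ∀ j ∈ s, j ≤ n) :
    ∑ i ∈ range n, (-1 : ℤ) ^ i * (s.filter (i + 1 ≤ ·)).card = (s.filter Odd).card := by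
  induction s using Multiset.induction with
  | empty => simp
  | cons j s ih =>
    have hj : ∑ i ∈ range n, (if i + 1 ≤ j then (-1 : ℤ) ^ i else 0) = if Odd j then 1 else 0 := by
      have hfilter : (range n).filter (· + 1 ≤ j) = range j := by
        ext i
        have := hs j (Multiset.mem_cons_self j s)
        simp only [mem_filter, mem_range]
        lia
      rw [← sum_filter, hfilter, neg_one_geom_sum]
      simp only [← Nat.not_odd_iff_even, ite_not]
    have hcard (p : ℕ → Prop) [DecidablePred p] :
        (((j ::ₘ s).filter p).card : ℤ) = (if p j then 1 else 0) + (s.filter p).card := by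
      split_ifs with h <;> simp [h, add_comm]
    simp only [hcard, mul_add, sum_add_distrib, mul_ite, mul_one, mul_zero]
    rw [hj, ih fun i hi => hs i (Multiset.mem_cons_of_mem hi)]

lemma sum_neg_one_pow_mul_colLen :
    ∑ i ∈ range n, (-1 : ℤ) ^ i * colLen lam (i + 1) = numOddParts lam :=
  sum_neg_one_pow_mul_card_filter_le fun _ hj => lam.le_of_mem_parts hj

lemma two_mul_choose_two_add_mod_two (c i : ℕ) :
    (2 * (c + i % 2).choose 2 : ℤ) = c ^ 2 - (-1) ^ i * c := by
  have htwo (n : ℕ) : (2 * n.choose 2 : ℤ) = n * (n - 1) := by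
    induction n with
    | zero => simp
    | succ n ih =>
      rw [Nat.choose_succ_succ', Nat.choose_one_right]
      push_cast
      linear_combination ih
  rcases Nat.even_or_odd i with hi | hi
  · rw [htwo, Nat.even_iff.1 hi, hi.neg_one_pow]
    push_cast
    ring
  · rw [htwo, Nat.odd_iff.1 hi, hi.neg_one_pow]
    push_cast
    ring

lemma sum_sq_colLen_sub_numOddParts :
    ∑ i ∈ Icc 1 n, (colLen lam i : ℤ) ^ 2 - numOddParts lam =
      2 * ∑ i ∈ range n, ((colLen lam (i + 1) + i % 2).choose 2 : ℤ) := by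
  rw [← sum_neg_one_pow_mul_colLen, mul_sum, sum_Icc_eq_sum_range_succ, ← sum_sub_distrib]
  exact sum_congr rfl fun i _ => (two_mul_choose_two_add_mod_two _ _).symm

end Columns

section AddColumn

variable {n : ℕ}

/-- The partition obtained from `mu` by putting a new first column of length `k` in front. -/
def addColumn (k : ℕ) (mu : n.Partition) (h : mu.parts.card ≤ k) : (n + k).Partition where
  parts := mu.parts.map (· + 1) + Multiset.replicate (k - mu.parts.card) 1
  parts_pos {i} hi := by
    rcases Multiset.mem_add.1 hi with hi | hi
    · obtain ⟨j, -, rfl⟩ := Multiset.mem_map.1 hi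
      exact j.succ_pos
    · simp [Multiset.eq_of_mem_replicate hi]
  parts_sum := by simp [Multiset.sum_map_add, mu.parts_sum, add_assoc, h]

/-- The partition obtained from `lam` by deleting its first column, of length `k`. -/
def removeColumn (k : ℕ) (lam : (n + k).Partition) (h : lam.parts.card = k) : n.Partition :=
  .ofSums n (lam.parts.map (· - 1)) <| by
    have hsum := congrArg Multiset.sum (map_add_one_map_sub_one_parts lam)
    simpa [Multiset.sum_map_add, h, lam.parts_sum] using hsum

lemma card_parts_addColumn (k : ℕ) (mu : n.Partition) (h : mu.parts.card ≤ k) :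
    (addColumn k mu h).parts.card = k := by
  simp [addColumn, h]

lemma card_parts_removeColumn_le (k : ℕ) (lam : (n + k).Partition) (h : lam.parts.card = k) :
    (removeColumn k lam h).parts.card ≤ k := by
  refine (Multiset.card_le_card (Multiset.filter_le _ _)).trans ?_
  simp [h]

/-- Prepending a column of length `k` is a bijection from the partitions of `n` with at most `k`
parts to the partitions of `n + k` with exactly `k` parts. -/
def addColumnEquiv (n k : ℕ) :
    {mu : n.Partition // mu.parts.card ≤ k} ≃ {lam : (n + k).Partition // lam.parts.card = k} where
  toFun mu := ⟨addColumn k mu.1 mu.2, card_parts_addColumn k mu.1 mu.2⟩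
  invFun lam := ⟨removeColumn k lam.1 lam.2, card_parts_removeColumn_le k lam.1 lam.2⟩
  left_inv := by
    rintro ⟨mu, h⟩
    refine Subtype.ext (Nat.Partition.ext ?_)
    have hpos : mu.parts.filter (· ≠ 0) = mu.parts :=
      Multiset.filter_eq_self.2 fun _ hi => (mu.parts_pos hi).ne'
    have hzero : (Multiset.replicate (k - mu.parts.card) 0).filter (· ≠ 0) = 0 :=
      Multiset.filter_eq_nil.2 fun _ hi => not_not.2 (Multiset.eq_of_mem_replicate hi)
    simp only [removeColumn, addColumn, Nat.Partition.ofSums, Multiset.map_add, Multiset.map_map,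
      Multiset.map_replicate, Multiset.filter_add, tsub_self, Function.comp_def,
      Nat.add_sub_cancel, Multiset.map_id', hpos, hzero, add_zero]
  right_inv := by
    rintro ⟨lam, h⟩
    refine Subtype.ext (Nat.Partition.ext ?_)
    set t := lam.parts.map (· - 1) with ht
    have hsplit : t.filter (· ≠ 0) + Multiset.replicate (t.count 0) 0 = t := by
      rw [← Multiset.filter_eq', add_comm, Multiset.filter_add_not]
    have hcard : k - (t.filter (· ≠ 0)).card = t.count 0 := by
      have := congrArg Multiset.card hsplit
      simp only [Multiset.card_add, Multiset.card_replicate] at this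
      have : t.card = k := by simp [ht, h]
      lia
    have hmap : t.map (· + 1) = lam.parts := map_add_one_map_sub_one_parts lam
    change (t.filter (· ≠ 0)).map (· + 1) + Multiset.replicate (k - (t.filter (· ≠ 0)).card) 1 = _
    rw [hcard, ← hmap]
    nth_rw 3 [← hsplit]
    simp

section

variable (k : ℕ) (mu : n.Partition) (h : mu.parts.card ≤ k)

lemma colLen_addColumn_one : colLen (addColumn k mu h) 1 = k := by
  rw [colLen_one, card_parts_addColumn]

lemma colLen_addColumn_add_two (i : ℕ) :
    colLen (addColumn k mu h) (i + 2) = colLen mu (i + 1) := by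
  have hzero : (Multiset.replicate (k - mu.parts.card) 1).filter (i + 2 ≤ ·) = 0 :=
    Multiset.filter_eq_nil.2 fun j hj => by rw [Multiset.eq_of_mem_replicate hj]; lia
  rw [colLen, colLen, addColumn, Multiset.filter_add, hzero, add_zero, Multiset.filter_map,
    Multiset.card_map]
  exact congrArg _ (Multiset.filter_congr fun _ _ => Nat.succ_le_succ_iff)

lemma count_addColumn_one : (addColumn k mu h).parts.count 1 = k - mu.parts.card := by
  have hzero : (mu.parts.map (· + 1)).count 1 = 0 := by
    simpa [Multiset.count_eq_zero] using fun h0 => (mu.parts_pos h0).ne' rfl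
  rw [addColumn, Multiset.count_add, hzero, Multiset.count_replicate_self, zero_add]

lemma count_addColumn_add_two (i : ℕ) :
    (addColumn k mu h).parts.count (i + 2) = mu.parts.count (i + 1) := by
  rw [addColumn, Multiset.count_add, Multiset.count_replicate, if_neg (by lia), add_zero,
    Multiset.count_map_eq_count' (· + 1) mu.parts (add_left_injective 1) (i + 1)]

end

end AddColumn

section Weight

variable {K : Type*} [Field K] (u : K) (ε : ℕ)

/-- The contribution to the summand of a column of length `c` followed by one of length `c - d`.
The parity of `ε` is that of the number of columns to the left of it; a column at an odd position
must have even `d`. -/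
def columnWeight (c d : ℕ) : K :=
  if Odd ε → Even d then u ^ (c + ε % 2).choose 2 / qPochSelf (u ^ 2) (d / 2) else 0

/-- The weight of a partition whose first column sits at position `ε`. For `ε = 0` this is the
summand of the theorem at `q = u⁻¹` without its factor `1 - q ^ (-λ'₁)`; for `ε = 1` it is the odd
parts that must have even multiplicity. Only the parity of `ε` matters. -/
def partitionWeight {n : ℕ} (lam : n.Partition) : K :=
  ∏ i ∈ range n, columnWeight u (ε + i) (colLen lam (i + 1)) (lam.parts.count (i + 1))

/-- The total weight of the partitions of `n` into exactly `k` parts. -/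
def weightSum (n k : ℕ) : K :=
  ∑ lam : n.Partition with lam.parts.card = k, partitionWeight u ε lam

lemma columnWeight_add_two (c d : ℕ) : columnWeight u (ε + 2) c d = columnWeight u ε c d := by
  simp [columnWeight, Nat.odd_add]

lemma columnWeight_zero_zero : columnWeight u ε 0 0 = 1 := by
  have hchoose : (ε % 2).choose 2 = 0 := Nat.choose_eq_zero_of_lt (by lia)
  simp [columnWeight, hchoose]

lemma columnWeight_zero (c d : ℕ) :
    columnWeight u 0 c d = u ^ c.choose 2 / qPochSelf (u ^ 2) (d / 2) := by
  simp [columnWeight]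

lemma columnWeight_one_of_even (c : ℕ) {d : ℕ} (hd : Even d) :
    columnWeight u 1 c d = u ^ (c + 1).choose 2 / qPochSelf (u ^ 2) (d / 2) := by
  simp [columnWeight, hd]

lemma columnWeight_one_of_odd (c : ℕ) {d : ℕ} (hd : Odd d) : columnWeight u 1 c d = 0 := by
  simp [columnWeight, hd]

section

variable {n : ℕ}

lemma partitionWeight_eq_prod_range (lam : n.Partition) {N : ℕ} (hN : n ≤ N) :
    partitionWeight u ε lam =
      ∏ i ∈ range N, columnWeight u (ε + i) (colLen lam (i + 1)) (lam.parts.count (i + 1)) := by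
  refine prod_subset (range_subset_range.2 hN) fun i _ hi => ?_
  have hni : n < i + 1 := Nat.lt_succ_of_le (not_lt.1 (mt mem_range.2 hi))
  rw [colLen_eq_zero lam hni, count_parts_eq_zero lam hni, columnWeight_zero_zero]

lemma partitionWeight_addColumn (k : ℕ) (mu : n.Partition) (h : mu.parts.card ≤ k) :
    partitionWeight u ε (addColumn k mu h) =
      columnWeight u ε k (k - mu.parts.card) * partitionWeight u (ε + 1) mu := by
  rw [partitionWeight_eq_prod_range u ε _ (n + k).le_succ,
    partitionWeight_eq_prod_range u (ε + 1) mu (n.le_add_right k), prod_range_succ', mul_comm]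
  simp only [colLen_addColumn_one, colLen_addColumn_add_two, count_addColumn_one,
    count_addColumn_add_two, add_zero, zero_add, add_assoc, add_comm 1, one_add_one_eq_two]

lemma partitionWeight_add_two (lam : n.Partition) :
    partitionWeight u (ε + 2) lam = partitionWeight u ε lam :=
  prod_congr rfl fun i _ => by rw [add_right_comm, columnWeight_add_two]

lemma partitionWeight_zero_eq_ite (lam : n.Partition)
    [Decidable (∀ i, Even i → Even (lam.parts.count i))] :
    partitionWeight u 0 lam =
      if ∀ i, Even i → Even (lam.parts.count i) then
        u ^ (∑ i ∈ range n, (colLen lam (i + 1) + i % 2).choose 2) /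
          ∏ i ∈ range n, qPochSelf (u ^ 2) (lam.parts.count (i + 1) / 2)
      else 0 := by
  have hiff : (∀ i, Even i → Even (lam.parts.count i)) ↔
      ∀ i ∈ range n, Odd (0 + i) → Even (lam.parts.count (i + 1)) := by
    refine ⟨fun h i _ hi => h _ (by rw [zero_add] at hi; exact hi.add_one), fun h i hi => ?_⟩
    rcases i with _ | i
    · simp [Multiset.count_eq_zero_of_notMem fun h0 => (lam.parts_pos h0).ne' rfl]
    · rcases lt_or_ge i n with hin | hin
      · exact h i (mem_range.2 hin) (by simpa [Nat.even_add_one] using hi)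
      · simp [count_parts_eq_zero lam (Nat.lt_succ_of_le hin)]
  simp only [partitionWeight, columnWeight, prod_ite_zero, hiff, prod_div_distrib, zero_add,
    prod_pow_eq_pow_sum]

end

lemma weightSum_add_two (n k : ℕ) : weightSum u (ε + 2) n k = weightSum u ε n k :=
  sum_congr rfl fun lam _ => partitionWeight_add_two u ε lam

lemma weightSum_eq_zero_of_lt {n k : ℕ} (h : n < k) : weightSum u ε n k = 0 := by
  rw [weightSum, filter_false_of_mem, sum_empty]
  exact fun lam _ => ((card_parts_le lam).trans_lt h).ne

lemma weightSum_zero_right {n : ℕ} (h : n ≠ 0) : weightSum u ε n 0 = 0 := by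
  rw [weightSum, filter_false_of_mem, sum_empty]
  exact fun lam _ h0 => h (by simpa [Multiset.card_eq_zero.1 h0] using lam.parts_sum.symm)

lemma weightSum_zero_left (k : ℕ) : weightSum u ε 0 k = if k = 0 then 1 else 0 := by
  rcases k with _ | k
  · simp [weightSum, partitionWeight]
  · simp [weightSum_eq_zero_of_lt]

lemma weightSum_add (n k : ℕ) :
    weightSum u ε (n + k) k =
      ∑ j ∈ range (k + 1), columnWeight u ε k (k - j) * weightSum u (ε + 1) n j := by
  calc weightSum u ε (n + k) k
    _ = ∑ lam : {lam : (n + k).Partition // lam.parts.card = k}, partitionWeight u ε lam.1 :=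
      sum_subtype _ (fun _ => by simp) _
    _ = ∑ mu : {mu : n.Partition // mu.parts.card ≤ k},
          columnWeight u ε k (k - mu.1.parts.card) * partitionWeight u (ε + 1) mu.1 := by
      rw [← (addColumnEquiv n k).sum_comp]
      exact sum_congr rfl fun mu _ => partitionWeight_addColumn u ε k mu.1 mu.2
    _ = ∑ mu : n.Partition with mu.parts.card ≤ k,
          columnWeight u ε k (k - mu.parts.card) * partitionWeight u (ε + 1) mu :=
      (sum_subtype _ (fun _ => by simp)
        fun mu => columnWeight u ε k (k - mu.parts.card) * partitionWeight u (ε + 1) mu).symm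
    _ = _ := by
      have hmaps : ∀ mu ∈ ({mu | mu.parts.card ≤ k} : Finset n.Partition),
          mu.parts.card ∈ range (k + 1) :=
        fun mu hmu => mem_range.2 (Nat.lt_succ_of_le (mem_filter.1 hmu).2)
      rw [← sum_fiberwise_of_maps_to hmaps]
      refine sum_congr rfl fun j hj => ?_
      rw [weightSum, mul_sum, filter_filter]
      refine sum_congr (filter_congr fun mu _ => ?_) fun mu hmu => by rw [(mem_filter.1 hmu).2]
      have := mem_range.1 hj
      lia

lemma weightSum_self (k : ℕ) : weightSum u ε k k = columnWeight u ε k k := by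
  have h := weightSum_add u ε 0 k
  simpa [weightSum_zero_left] using h

end Weight

section ClosedForm

variable {K : Type*} [Field K] {u : K}

lemma two_mul_add_one_choose_two (a : ℕ) : (2 * a + 1).choose 2 = a * (2 * a + 1) := by
  rw [Nat.choose_two_right, Nat.add_sub_cancel, mul_comm, mul_assoc,
    Nat.mul_div_cancel_left _ two_pos]

lemma two_mul_add_two_choose_two (a : ℕ) : (2 * a + 2).choose 2 = (a + 1) * (2 * a + 1) := by
  rw [Nat.choose_two_right, ← mul_add_one, mul_assoc, Nat.mul_div_cancel_left _ two_pos]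
  rfl

lemma weightSum_zero_add_odd (u : K) (n a : ℕ) :
    weightSum u 0 (n + (2 * a + 1)) (2 * a + 1) =
      u ^ (a * (2 * a + 1)) * ∑ b ∈ range (a + 1),
        (weightSum u 1 n (2 * b) + weightSum u 1 n (2 * b + 1)) / qPochSelf (u ^ 2) (a - b) := by
  rw [weightSum_add, show 2 * a + 1 + 1 = 2 * (a + 1) by ring, sum_range_two_mul, mul_sum]
  refine sum_congr rfl fun b hb => ?_
  have := mem_range.1 hb
  rw [columnWeight_zero, columnWeight_zero, two_mul_add_one_choose_two,
    show (2 * a + 1 - 2 * b) / 2 = a - b by lia,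
    show (2 * a + 1 - (2 * b + 1)) / 2 = a - b by lia]
  ring

lemma weightSum_zero_add_even (u : K) {n : ℕ} (hn : n ≠ 0) (a : ℕ) :
    weightSum u 0 (n + (2 * a + 2)) (2 * a + 2) =
      u ^ ((a + 1) * (2 * a + 1)) * ∑ b ∈ range (a + 1),
        (weightSum u 1 n (2 * b + 1) + weightSum u 1 n (2 * b + 2)) /
          qPochSelf (u ^ 2) (a - b) := by
  rw [weightSum_add, sum_range_succ', weightSum_zero_right _ _ hn, mul_zero, add_zero,
    show 2 * a + 2 = 2 * (a + 1) by ring, sum_range_two_mul, mul_sum]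
  refine sum_congr rfl fun b hb => ?_
  have := mem_range.1 hb
  rw [columnWeight_zero, columnWeight_zero, mul_add_one, two_mul_add_two_choose_two,
    show (2 * a + 2 - (2 * b + 1)) / 2 = a - b by lia,
    show (2 * a + 2 - (2 * b + 1 + 1)) / 2 = a - b by lia]
  ring

lemma weightSum_one_add_odd (u : K) (n a : ℕ) :
    weightSum u 1 (n + (2 * a + 1)) (2 * a + 1) =
      u ^ ((a + 1) * (2 * a + 1)) * ∑ b ∈ range (a + 1),
        weightSum u 0 n (2 * b + 1) / qPochSelf (u ^ 2) (a - b) := by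
  rw [weightSum_add, show 2 * a + 1 + 1 = 2 * (a + 1) by ring, sum_range_two_mul, mul_sum]
  refine sum_congr rfl fun b hb => ?_
  have := mem_range.1 hb
  rw [columnWeight_one_of_odd _ _ (by rw [Nat.odd_iff]; lia),
    columnWeight_one_of_even _ _ (by rw [Nat.even_iff]; lia), two_mul_add_two_choose_two,
    show (2 * a + 1 - (2 * b + 1)) / 2 = a - b by lia,
    show weightSum u (1 + 1) n (2 * b + 1) = _ from weightSum_add_two u 0 n _]
  ring

lemma weightSum_one_add_even (u : K) {n : ℕ} (hn : n ≠ 0) (a : ℕ) :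
    weightSum u 1 (n + (2 * a + 2)) (2 * a + 2) =
      u ^ ((a + 1) * (2 * a + 3)) * ∑ b ∈ range (a + 1),
        weightSum u 0 n (2 * b + 2) / qPochSelf (u ^ 2) (a - b) := by
  rw [weightSum_add, sum_range_succ', weightSum_zero_right _ _ hn, mul_zero, add_zero,
    show 2 * a + 2 = 2 * (a + 1) by ring, sum_range_two_mul, mul_sum]
  refine sum_congr rfl fun b hb => ?_
  have := mem_range.1 hb
  rw [columnWeight_one_of_odd _ _ (by rw [Nat.odd_iff]; lia),
    columnWeight_one_of_even _ _ (by rw [Nat.even_iff]; lia), two_mul_add_one_choose_two,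
    show (2 * (a + 1) - (2 * b + 1 + 1)) / 2 = a - b by lia,
    show weightSum u (1 + 1) n (2 * b + 1 + 1) = _ from weightSum_add_two u 0 n _]
  ring

/-- The values of `weightSum u 1` on the partitions of `2 * n + 2`; this is the induction hypothesis
of the joint induction over `ε = 0` and `ε = 1`. The name refers to the Jordan types of the
nilpotent elements of symplectic Lie algebras, whose odd parts have even multiplicities. -/
structure SymplecticClosedForm (u : K) (n : ℕ) : Prop where
  even (a : ℕ) : weightSum u 1 (2 * n + 2) (2 * a + 2) =
    u ^ (n + 1) * (u ^ 2) ^ ((a + 1) ^ 2) * gaussBinom (u ^ 2) n a / qPochSelf (u ^ 2) (a + 1)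
  odd (a : ℕ) : weightSum u 1 (2 * n + 2) (2 * a + 1) =
    u ^ (n + 1) * (u ^ 2) ^ (a * (a + 1)) * gaussBinom (u ^ 2) n a / qPochSelf (u ^ 2) a

namespace SymplecticClosedForm

lemma even_add_odd {n : ℕ} (h : SymplecticClosedForm u n) (b : ℕ) :
    weightSum u 1 (2 * n + 2) (2 * b) + weightSum u 1 (2 * n + 2) (2 * b + 1) =
      u ^ (n + 1) * (u ^ 2) ^ (b ^ 2) * gaussBinom (u ^ 2) (n + 1) b / qPochSelf (u ^ 2) b := by
  rw [h.odd]
  rcases b with _ | b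
  · simp [weightSum_zero_right]
  · rw [mul_add_one, h.even, gaussBinom_succ_succ]
    ring

lemma odd_add_even (hQ : ¬IsOfFinOrder (u ^ 2)) {n : ℕ} (h : SymplecticClosedForm u n) (b : ℕ) :
    weightSum u 1 (2 * n + 2) (2 * b + 1) + weightSum u 1 (2 * n + 2) (2 * b + 2) =
      u ^ (n + 1) * (u ^ 2) ^ (b * (b + 1)) * gaussBinom (u ^ 2) n b /
        qPochSelf (u ^ 2) (b + 1) := by
  have := qPochSelf_ne_zero hQ b
  have := one_sub_pow_succ_ne_zero hQ b
  rw [h.odd, h.even, qPochSelf_succ]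
  field_simp
  ring

lemma weightSum_zero_odd_of_forall_lt (hQ : ¬IsOfFinOrder (u ^ 2)) {m : ℕ}
    (h : ∀ n < m, SymplecticClosedForm u n) (a : ℕ) :
    weightSum u 0 (2 * m + 1) (2 * a + 1) =
      u ^ m * (u ^ 2) ^ (a ^ 2) * gaussBinom (u ^ 2) m a / qPochSelf (u ^ 2) a := by
  rcases lt_trichotomy m a with hma | rfl | hma
  · rw [weightSum_eq_zero_of_lt u 0 (by lia), gaussBinom_eq_zero_of_lt _ hma, mul_zero, zero_div]
  · rw [weightSum_self, columnWeight_zero, two_mul_add_one_choose_two, gaussBinom_self,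
      show (2 * m + 1) / 2 = m by lia]
    ring
  obtain ⟨n, rfl⟩ := Nat.exists_eq_add_of_lt hma
  have hvandermonde := sum_gaussBinom_div_qPochSelf_mul hQ (n + 1) a 0
  simp only [add_zero] at hvandermonde
  rw [show 2 * (a + n + 1) + 1 = 2 * n + 2 + (2 * a + 1) by ring, weightSum_zero_add_odd,
    show a + n + 1 = n + 1 + a by ring, mul_div_assoc, ← hvandermonde, mul_sum, mul_sum]
  refine sum_congr rfl fun b _ => ?_
  rw [(h n (by lia)).even_add_odd]
  ring

lemma weightSum_zero_even_of_forall_lt (hQ : ¬IsOfFinOrder (u ^ 2)) {m : ℕ}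
    (h : ∀ n < m, SymplecticClosedForm u n) (a : ℕ) :
    weightSum u 0 (2 * m + 2) (2 * a + 2) =
      u ^ (m + 1) * (u ^ 2) ^ (a * (a + 1)) * gaussBinom (u ^ 2) m a /
        qPochSelf (u ^ 2) (a + 1) := by
  rcases lt_trichotomy m a with hma | rfl | hma
  · rw [weightSum_eq_zero_of_lt u 0 (by lia), gaussBinom_eq_zero_of_lt _ hma, mul_zero, zero_div]
  · rw [weightSum_self, columnWeight_zero, two_mul_add_two_choose_two, gaussBinom_self,
      show (2 * m + 2) / 2 = m + 1 by lia]
    ring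
  obtain ⟨n, rfl⟩ := Nat.exists_eq_add_of_lt hma
  rw [show 2 * (a + n + 1) + 2 = 2 * n + 2 + (2 * a + 2) by ring,
    weightSum_zero_add_even u (by lia), show a + n + 1 = n + a + 1 by ring, mul_div_assoc,
    ← sum_gaussBinom_div_qPochSelf_mul hQ, mul_sum, mul_sum]
  refine sum_congr rfl fun b _ => ?_
  rw [(h n (by lia)).odd_add_even hQ]
  ring

lemma weightSum_one_even_of_forall_lt (hQ : ¬IsOfFinOrder (u ^ 2)) {m : ℕ}
    (h : ∀ n < m, SymplecticClosedForm u n) (a : ℕ) :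
    weightSum u 1 (2 * m + 2) (2 * a + 2) =
      u ^ (m + 1) * (u ^ 2) ^ ((a + 1) ^ 2) * gaussBinom (u ^ 2) m a /
        qPochSelf (u ^ 2) (a + 1) := by
  rcases lt_trichotomy m a with hma | rfl | hma
  · rw [weightSum_eq_zero_of_lt u 1 (by lia), gaussBinom_eq_zero_of_lt _ hma, mul_zero, zero_div]
  · rw [weightSum_self, columnWeight_one_of_even _ _ (by simp [parity_simps]),
      show 2 * m + 2 + 1 = 2 * (m + 1) + 1 by ring, two_mul_add_one_choose_two, gaussBinom_self,
      show (2 * m + 2) / 2 = m + 1 by lia]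
    ring
  obtain ⟨n, rfl⟩ := Nat.exists_eq_add_of_lt hma
  rw [show 2 * (a + n + 1) + 2 = 2 * n + 2 + (2 * a + 2) by ring,
    weightSum_one_add_even u (by lia), show a + n + 1 = n + a + 1 by ring, mul_div_assoc,
    ← sum_gaussBinom_div_qPochSelf_mul hQ, mul_sum, mul_sum]
  refine sum_congr rfl fun b _ => ?_
  rw [weightSum_zero_even_of_forall_lt hQ fun n' hn => h n' (by lia)]
  ring

lemma weightSum_one_odd_of_forall_lt (hQ : ¬IsOfFinOrder (u ^ 2)) {m : ℕ}
    (h : ∀ n < m, SymplecticClosedForm u n) (a : ℕ) :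
    weightSum u 1 (2 * m + 2) (2 * a + 1) =
      u ^ (m + 1) * (u ^ 2) ^ (a * (a + 1)) * gaussBinom (u ^ 2) m a / qPochSelf (u ^ 2) a := by
  rcases lt_or_ge m a with hma | hma
  · rw [weightSum_eq_zero_of_lt u 1 (by lia), gaussBinom_eq_zero_of_lt _ hma, mul_zero, zero_div]
  obtain ⟨n, rfl⟩ := Nat.exists_eq_add_of_le hma
  have hvandermonde := sum_gaussBinom_div_qPochSelf_mul hQ n a 0
  simp only [add_zero] at hvandermonde
  rw [show 2 * (a + n) + 2 = 2 * n + 1 + (2 * a + 1) by ring, weightSum_one_add_odd,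
    add_comm a n, mul_div_assoc, ← hvandermonde, mul_sum, mul_sum]
  refine sum_congr rfl fun b _ => ?_
  rw [weightSum_zero_odd_of_forall_lt hQ fun n' hn => h n' (by lia)]
  ring

end SymplecticClosedForm

lemma symplecticClosedForm (hQ : ¬IsOfFinOrder (u ^ 2)) (m : ℕ) : SymplecticClosedForm u m := by
  induction m using Nat.strong_induction_on with
  | _ m ih =>
    exact ⟨SymplecticClosedForm.weightSum_one_even_of_forall_lt hQ ih,
      SymplecticClosedForm.weightSum_one_odd_of_forall_lt hQ ih⟩

theorem weightSum_zero_odd (hQ : ¬IsOfFinOrder (u ^ 2)) (m a : ℕ) :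
    weightSum u 0 (2 * m + 1) (2 * a + 1) =
      u ^ m * (u ^ 2) ^ (a ^ 2) * gaussBinom (u ^ 2) m a / qPochSelf (u ^ 2) a :=
  SymplecticClosedForm.weightSum_zero_odd_of_forall_lt hQ (fun n _ => symplecticClosedForm hQ n) a

lemma sum_one_sub_mul_weightSum (hQ : ¬IsOfFinOrder (u ^ 2)) (m : ℕ) :
    ∑ a ∈ range (m + 1), (1 - u ^ (2 * a + 1)) * weightSum u 0 (2 * m + 1) (2 * a + 1) =
      u ^ m / qPochSelf (u ^ 2) m - u ^ (m + 1) * alternatingQSum (u ^ 2) m := by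
  have hone := sum_gaussBinom_div_qPochSelf hQ m 0
  simp only [add_zero] at hone
  rw [← sum_gaussBinom_div_qPochSelf_eq_alternatingQSum hQ, div_eq_mul_one_div, ← hone, mul_sum,
    mul_sum, ← sum_sub_distrib]
  refine sum_congr rfl fun a _ => ?_
  rw [weightSum_zero_odd hQ]
  ring

theorem sum_one_sub_mul_partitionWeight (hQ : ¬IsOfFinOrder (u ^ 2)) (m : ℕ) :
    ∑ lam : (2 * m + 1).Partition, (1 - u ^ lam.parts.card) * partitionWeight u 0 lam =
      u ^ m / qPochSelf (u ^ 2) m - u ^ (m + 1) * alternatingQSum (u ^ 2) m := by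
  have hfiber : ∑ lam : (2 * m + 1).Partition, (1 - u ^ lam.parts.card) * partitionWeight u 0 lam =
      ∑ k ∈ range (2 * (m + 1)), (1 - u ^ k) * weightSum u 0 (2 * m + 1) k := by
    have hmaps : ∀ lam ∈ (univ : Finset (2 * m + 1).Partition),
        lam.parts.card ∈ range (2 * (m + 1)) :=
      fun lam _ => mem_range.2 (Nat.lt_succ_of_le (card_parts_le lam))
    rw [← sum_fiberwise_of_maps_to hmaps]
    refine sum_congr rfl fun k _ => ?_
    rw [weightSum, mul_sum]
    exact sum_congr rfl fun lam hlam => by rw [(mem_filter.1 hlam).2]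
  have heven (a : ℕ) : weightSum u 0 (2 * m + 1) (2 * a) = 0 := by
    classical
    refine sum_eq_zero fun lam hlam => ?_
    rw [partitionWeight_zero_eq_ite, if_neg]
    intro hlam'
    have := even_add_card_parts lam hlam'
    rw [(mem_filter.1 hlam).2] at this
    simp [parity_simps] at this
  rw [hfiber, sum_range_two_mul, ← sum_one_sub_mul_weightSum hQ]
  exact sum_congr rfl fun a _ => by rw [heven, mul_zero, zero_add]

end ClosedForm

section Summand

variable {K : Type*} [Field K]

lemma inv_sq_eq_zpow (q : K) : q⁻¹ ^ 2 = q ^ (-2 : ℤ) := by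
  rw [inv_pow, ← zpow_natCast, zpow_neg]
  rfl

lemma inv_pow_sum_choose_two (q : K) {n : ℕ} (lam : n.Partition) :
    q⁻¹ ^ (∑ i ∈ range n, (colLen lam (i + 1) + i % 2).choose 2) =
      (q ^ ((∑ i ∈ Icc 1 n, (colLen lam i : ℤ) ^ 2 - numOddParts lam) / 2))⁻¹ := by
  rw [sum_sq_colLen_sub_numOddParts, Int.mul_ediv_cancel_left _ two_ne_zero, inv_pow,
    ← zpow_natCast, Nat.cast_sum]

lemma rpow_sum_sq_colLen_sub_numOddParts (q : ℝ) {n : ℕ} (lam : n.Partition) :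
    q ^ ((∑ i ∈ Icc 1 n, (colLen lam i : ℝ) ^ 2 - numOddParts lam) / 2) =
      q ^ ((∑ i ∈ Icc 1 n, (colLen lam i : ℤ) ^ 2 - numOddParts lam) / 2) := by
  have hdvd : (2 : ℤ) ∣ ∑ i ∈ Icc 1 n, (colLen lam i : ℤ) ^ 2 - numOddParts lam :=
    ⟨_, sum_sq_colLen_sub_numOddParts lam⟩
  rw [← Real.rpow_intCast, Int.cast_div hdvd two_ne_zero]
  push_cast
  rfl

lemma one_sub_mul_partitionWeight_eq_ite (q : K) {n : ℕ} (lam : n.Partition)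
    [Decidable (∀ i, Even i → Even (lam.parts.count i))] :
    (1 - q⁻¹ ^ lam.parts.card) * partitionWeight q⁻¹ 0 lam =
      if ∀ i, Even i → Even (lam.parts.count i) then
        (1 - q ^ (-(colLen lam 1 : ℤ))) /
          (q ^ ((∑ i ∈ Icc 1 n, (colLen lam i : ℤ) ^ 2 - numOddParts lam) / 2) *
            ∏ i ∈ Icc 1 n, qPochSelf (q ^ (-2 : ℤ)) (lam.parts.count i / 2))
      else 0 := by
  rw [partitionWeight_zero_eq_ite, mul_ite, mul_zero, inv_pow_sum_choose_two, inv_sq_eq_zpow,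
    prod_Icc_eq_prod_range_succ, colLen_one, zpow_neg _ (_ : ℕ), zpow_natCast, inv_pow]
  refine if_congr Iff.rfl ?_ rfl
  ring

lemma neg_alternatingQSum_inv_sq (q : K) (m : ℕ) :
    -alternatingQSum (q⁻¹ ^ 2) m =
      ∑ i ∈ range (m + 1),
        (-1 : K) ^ ((i : ℤ) - 1) / (q ^ (i * (i + 1)) * qPochSelf (q⁻¹ ^ 2) (m - i)) := by
  rw [alternatingQSum, ← sum_neg_distrib]
  refine sum_congr rfl fun i _ => ?_
  have hpow : (q⁻¹ ^ 2) ^ (i + 1).choose 2 = (q ^ (i * (i + 1)))⁻¹ := by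
    rw [← pow_mul, inv_pow, Nat.choose_two_right, Nat.add_sub_cancel, mul_comm (i + 1),
      Nat.mul_div_cancel' (Nat.even_mul_succ_self i).two_dvd]
  rw [hpow, zpow_sub_one₀ (by simp), zpow_natCast, inv_neg_one]
  ring

end Summand

open Classical in
theorem anzanello_second_conjecture_general {K : Type*} [Field K] {q : K} (hq0 : q ≠ 0)
    (hq : ¬IsOfFinOrder q) (m : ℕ) :
    (∑ lam : Nat.Partition (2 * m + 1),
      if ∀ i, Even i → Even (lam.parts.count i) then
        (1 - q ^ (-(colLen lam 1 : ℤ))) /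
          (q ^ ((∑ i ∈ Icc 1 (2 * m + 1), (colLen lam i : ℤ) ^ 2 - numOddParts lam) / 2) *
            ∏ i ∈ Icc 1 (2 * m + 1), qPochSelf (q ^ (-2 : ℤ)) (lam.parts.count i / 2))
      else 0) =
      1 / (q ^ m * qPochSelf (q ^ (-2 : ℤ)) m) +
        1 / q ^ (m + 1) * ∑ i ∈ range (m + 1),
          (-1 : K) ^ ((i : ℤ) - 1) /
            (q ^ (i * (i + 1)) * qPochSelf (q ^ (-2 : ℤ)) (m - i)) := by
  have hQ : ¬IsOfFinOrder (q⁻¹ ^ 2) := fun h => hq <| by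
    simpa only [isOfFinOrder_iff_pow_eq_one, inv_pow, inv_eq_one] using h.of_pow two_ne_zero
  simp only [← one_sub_mul_partitionWeight_eq_ite]
  rw [sum_one_sub_mul_partitionWeight hQ, ← inv_sq_eq_zpow, ← neg_alternatingQSum_inv_sq q,
    inv_pow q m, inv_pow q (m + 1)]
  field_simp
  ring

open Classical in
/-- Anzanello's second conjecture. -/
theorem anzanello_second_conjecture (q : ℝ) (hq : 1 < q) (m : ℕ) (hm : 1 ≤ m) :
    (∑ lam : Nat.Partition (2 * m + 1),
      if ∀ i, Even i → Even (lam.parts.count i) then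
        (1 - q ^ (-(colLen lam 1 : ℝ))) /
          (q ^ ((((∑ i ∈ Finset.Icc 1 (2 * m + 1), ((colLen lam i : ℝ)) ^ 2))
                - (numOddParts lam : ℝ)) / 2)
            * ∏ i ∈ Finset.Icc 1 (2 * m + 1),
                qPoch (q ^ (-2 : ℤ)) (q ^ (-2 : ℤ)) (lam.parts.count i / 2))
      else 0)
    = 1 / (q ^ m * qPoch (q ^ (-2 : ℤ)) (q ^ (-2 : ℤ)) m)
      + 1 / q ^ (m + 1) * ∑ i ∈ Finset.range (m + 1),
          (-1 : ℝ) ^ ((i : ℤ) - 1)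
            / (q ^ (i * (i + 1)) * qPoch (q ^ (-2 : ℤ)) (q ^ (-2 : ℤ)) (m - i)) := by
  have hq0 : 0 < q := zero_lt_one.trans hq
  have hfin : ¬IsOfFinOrder q := fun h => hq.ne' (h.eq_one hq0.le)
  have hneg (c : ℕ) : q ^ (-(c : ℝ)) = q ^ (-(c : ℤ)) := by
    rw [← Real.rpow_intCast, Int.cast_neg, Int.cast_natCast]
  simp only [qPoch_self, rpow_sum_sq_colLen_sub_numOddParts, hneg]
  exact anzanello_second_conjecture_general hq0.ne' hfin m
end

section
/- Let q be a real number with q > 1 and m ≥ 1 an integer. For 1 ≤ k ≤ m define a2_k = (1-q) · q^{-2k^2-k} / (q^{-2};q^{-2})_{k-1} · ( (q^{-2k};q^{-2})_{m-k} / (q^{-2};q^{-2})_{m-k} ) · q^{-m+k}. Then Σ_{k=1}^{m} a2_k = (1/(q^m (1+q))) · Σ_{i=1}^{m} (-1)^{i-1} q^{-i(i+1)} (1 - q^{2i}) / (1/q^2; 1/q^2)_{m-i}. -/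
/-!
Put `x = q⁻²` and `(x)ₙ = (x; x)ₙ`. Up to elementary factors, the left-hand side is the value at
`z = x²` of the polynomial `Uₙ(z) = ∑ₖ x^{k²} zᵏ / ((x)ₖ² (x)ₙ₋ₖ)`, where `n = m - 1`, and
the right-hand side is `Θₙ(1) - x Θₙ(x)` for `Θₙ(z) = ∑ᵢ (-1)ⁱ x^{i(i+1)/2} zⁱ / (x)ₙ₋ᵢ`.

Each family satisfies a `q`-difference equation in `z` and a recurrence in `n`. For `U`, taking
`z = x⁻¹` in both gives `Uₙ(1) = 1 / (x)ₙ²`; then the recurrences for `Uₙ(x)` and `Θₙ(1)` match,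
so `Θₙ(1) = (x)ₙ Uₙ(x)`. The two `q`-difference equations at `z = 1` express `Uₙ(x²)` and
`x Θₙ(x)` through these values.
-/

open Finset

section CommRing

variable {R : Type*} [CommRing R]

/-- The `q`-Pochhammer symbol `(a; Q)ₙ` over a commutative ring, extending `qPoch`. -/
def qPochhammer (a Q : R) (n : ℕ) : R := ∏ j ∈ range n, (1 - a * Q ^ j)

theorem qPochhammer_zero (a Q : R) : qPochhammer a Q 0 = 1 := prod_range_zero _

theorem qPochhammer_self_succ (x : R) (n : ℕ) :
    qPochhammer x x (n + 1) = qPochhammer x x n * (1 - x ^ (n + 1)) := by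
  rw [qPochhammer, prod_range_succ, ← pow_succ', qPochhammer]

theorem qPochhammer_add (a Q : R) (k d : ℕ) :
    qPochhammer a Q (k + d) = qPochhammer a Q k * qPochhammer (a * Q ^ k) Q d := by
  simp only [qPochhammer, prod_range_add, pow_add, mul_assoc]

theorem qPochhammer_ne_zero_of_le {a Q : R} {k n : ℕ} (h : qPochhammer a Q n ≠ 0) (hkn : k ≤ n) :
    qPochhammer a Q k ≠ 0 := by
  obtain ⟨d, rfl⟩ := Nat.exists_eq_add_of_le hkn
  exact left_ne_zero_of_mul (qPochhammer_add a Q k d ▸ h)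

theorem one_sub_pow_ne_zero_of_qPochhammer_self_ne_zero {x : R} {k n : ℕ}
    (h : qPochhammer x x n ≠ 0) (hkn : k + 1 ≤ n) : 1 - x ^ (k + 1) ≠ 0 :=
  right_ne_zero_of_mul (qPochhammer_self_succ x k ▸ qPochhammer_ne_zero_of_le h hkn)

theorem qPochhammer_self_ne_zero [IsDomain R] {x : R} {n : ℕ}
    (h : ∀ k ∈ Ioc 0 n, x ^ k ≠ 1) : qPochhammer x x n ≠ 0 := by
  refine prod_ne_zero_iff.2 fun j hj ↦ sub_ne_zero.2 ?_
  rw [← pow_succ']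
  exact (h (j + 1) (by simpa [Nat.succ_le_iff] using hj)).symm

end CommRing

section Field

variable {K : Type*} [Field K] {x : K} {n : ℕ}

theorem sum_antidiagonal_div_qPochhammer_succ (hn : qPochhammer x x (n + 1) ≠ 0) (f : ℕ → K)
    (z : K) :
    ∑ p ∈ antidiagonal (n + 1), f p.1 * (x * z) ^ p.1 / qPochhammer x x p.2 =
      ∑ p ∈ antidiagonal n, f p.1 * (x * z) ^ p.1 / qPochhammer x x p.2 +
        x ^ (n + 1) * ∑ p ∈ antidiagonal (n + 1), f p.1 * z ^ p.1 / qPochhammer x x p.2 := by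
  rw [← sub_eq_iff_eq_add]
  calc
    _ = ∑ p ∈ antidiagonal (n + 1),
          (1 - x ^ p.2) * (f p.1 * (x * z) ^ p.1 / qPochhammer x x p.2) := by
      rw [mul_sum, ← sum_sub_distrib]
      refine sum_congr rfl fun p hp ↦ ?_
      rw [← mem_antidiagonal.1 hp, pow_add]
      ring
    _ = _ := by
      rw [Nat.sum_antidiagonal_succ', pow_zero, sub_self, zero_mul, zero_add]
      refine sum_congr rfl fun p hp ↦ ?_
      have hp_le : p.2 + 1 ≤ n + 1 := by have := mem_antidiagonal.1 hp; lia
      have h_factor := one_sub_pow_ne_zero_of_qPochhammer_self_ne_zero hn hp_le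
      rw [qPochhammer_self_succ]
      field_simp

/-- The polynomial `Uₙ(z) = ∑ₖ x^{k²} zᵏ / ((x)ₖ² (x)ₙ₋ₖ)`, a finite form of Durfee's series
`∑ₖ x^{k²} zᵏ / (x)ₖ²`. The sum runs over the pairs `(k, n - k)`, which avoids truncated
subtraction. -/
def durfeeSum (x : K) (n : ℕ) (z : K) : K :=
  ∑ p ∈ antidiagonal n,
    x ^ p.1 ^ 2 / qPochhammer x x p.1 ^ 2 * z ^ p.1 / qPochhammer x x p.2

theorem durfeeSum_zero (x z : K) : durfeeSum x 0 z = 1 := by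
  simp [durfeeSum, qPochhammer_zero]

theorem durfeeSum_succ (hn : qPochhammer x x (n + 1) ≠ 0) (z : K) :
    durfeeSum x (n + 1) (x * z) = durfeeSum x n (x * z) + x ^ (n + 1) * durfeeSum x (n + 1) z :=
  sum_antidiagonal_div_qPochhammer_succ hn (fun k ↦ x ^ k ^ 2 / qPochhammer x x k ^ 2) z

/-- With `η` the shift `z ↦ x z`, the left-hand side is `(1 - η)² Uₙ₊₁`, and `(1 - η)²` multiplies
the coefficient of `zᵏ` by `(1 - xᵏ)²`, which reduces `(x)ₖ²` to `(x)ₖ₋₁²`. -/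
theorem durfeeSum_second_q_difference (hn : qPochhammer x x (n + 1) ≠ 0) (z : K) :
    durfeeSum x (n + 1) z - 2 * durfeeSum x (n + 1) (x * z) + durfeeSum x (n + 1) (x ^ 2 * z) =
      x * z * durfeeSum x n (x ^ 2 * z) := by
  calc
    _ = ∑ p ∈ antidiagonal (n + 1), (1 - x ^ p.1) ^ 2 *
          (x ^ p.1 ^ 2 / qPochhammer x x p.1 ^ 2 * z ^ p.1 / qPochhammer x x p.2) := by
      simp only [durfeeSum, mul_sum, ← sum_sub_distrib, ← sum_add_distrib]
      refine sum_congr rfl fun p _ ↦ ?_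
      ring
    _ = _ := by
      rw [Nat.sum_antidiagonal_succ, durfeeSum, mul_sum, pow_zero, sub_self,
        zero_pow two_ne_zero, zero_mul, zero_add]
      refine sum_congr rfl fun p hp ↦ ?_
      have hp_le : p.1 + 1 ≤ n + 1 := by have := mem_antidiagonal.1 hp; lia
      have h_factor := one_sub_pow_ne_zero_of_qPochhammer_self_ne_zero hn hp_le
      rw [qPochhammer_self_succ]
      field_simp
      ring

theorem durfeeSum_q_difference (hn : qPochhammer x x n ≠ 0) (z : K) :
    durfeeSum x n z - 2 * durfeeSum x n (x * z) + durfeeSum x n (x ^ 2 * z) =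
      x * z * (durfeeSum x n (x ^ 2 * z) - x ^ n * durfeeSum x n (x * z)) := by
  obtain _ | n := n
  · simp only [durfeeSum_zero, pow_zero]
    ring
  have h_succ := durfeeSum_succ hn (x * z)
  rw [← mul_assoc, ← sq] at h_succ
  rw [durfeeSum_second_q_difference hn, h_succ, add_sub_cancel_right]

theorem durfeeSum_one (hx : x ≠ 0) (hn : qPochhammer x x n ≠ 0) :
    durfeeSum x n 1 = 1 / qPochhammer x x n ^ 2 := by
  induction n with
  | zero => simp [durfeeSum_zero, qPochhammer_zero]
  | succ n ih =>
    -- At `z = x⁻¹` the factor `1 - x z` of `Uₙ₊₁(x² z)` in the `q`-difference equation vanishes.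
    have h_diff := durfeeSum_q_difference hn x⁻¹
    have h_succ := durfeeSum_succ hn x⁻¹
    have h_sq : x ^ 2 * x⁻¹ = x := by field_simp
    rw [mul_inv_cancel₀ hx, h_sq] at h_diff
    rw [mul_inv_cancel₀ hx, ih (qPochhammer_ne_zero_of_le hn n.le_succ)] at h_succ
    have h_step : (1 - x ^ (n + 1)) ^ 2 * durfeeSum x (n + 1) 1 = 1 / qPochhammer x x n ^ 2 := by
      linear_combination h_succ + x ^ (n + 1) * h_diff
    have h_factor := one_sub_pow_ne_zero_of_qPochhammer_self_ne_zero hn le_rfl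
    rw [qPochhammer_self_succ, mul_pow, ← div_div, ← h_step]
    field_simp

/-- The polynomial `Θₙ(z) = ∑ᵢ (-1)ⁱ x^{i(i+1)/2} zⁱ / (x)ₙ₋ᵢ`, a finite form of the partial theta
series `∑ᵢ (-1)ⁱ x^{i(i+1)/2} zⁱ`. The triangular exponent is encoded as a binomial coefficient,
and the sum runs over the pairs `(i, n - i)`. -/
def partialThetaSum (x : K) (n : ℕ) (z : K) : K :=
  ∑ p ∈ antidiagonal n,
    (-1) ^ p.1 * x ^ (p.1 + 1).choose 2 * z ^ p.1 / qPochhammer x x p.2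

theorem partialThetaSum_zero (x z : K) : partialThetaSum x 0 z = 1 := by
  simp [partialThetaSum, qPochhammer_zero]

theorem partialThetaSum_succ (hn : qPochhammer x x (n + 1) ≠ 0) (z : K) :
    partialThetaSum x (n + 1) (x * z) =
      partialThetaSum x n (x * z) + x ^ (n + 1) * partialThetaSum x (n + 1) z :=
  sum_antidiagonal_div_qPochhammer_succ hn (fun i ↦ (-1) ^ i * x ^ (i + 1).choose 2) z

theorem partialThetaSum_succ_eq_sub (x : K) (n : ℕ) (z : K) :
    partialThetaSum x (n + 1) z =
      1 / qPochhammer x x (n + 1) - x * z * partialThetaSum x n (x * z) := by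
  rw [partialThetaSum, Nat.sum_antidiagonal_succ, sub_eq_add_neg, partialThetaSum, mul_sum,
    ← sum_neg_distrib]
  congr 1
  · simp
  · refine sum_congr rfl fun p _ ↦ ?_
    rw [Nat.choose_succ_succ' (p.1 + 1) 1, Nat.choose_one_right]
    ring

theorem partialThetaSum_q_difference (hn : qPochhammer x x n ≠ 0) (z : K) :
    partialThetaSum x n z =
      1 / qPochhammer x x n -
        x * z * (partialThetaSum x n (x * z) - x ^ n * partialThetaSum x n z) := by
  obtain _ | n := n
  · simp [partialThetaSum_zero, qPochhammer_zero]
  rw [partialThetaSum_succ hn, add_sub_cancel_right, partialThetaSum_succ_eq_sub]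

theorem partialThetaSum_one_eq (hx : x ≠ 0) (hn : qPochhammer x x n ≠ 0) :
    partialThetaSum x n 1 = qPochhammer x x n * durfeeSum x n x := by
  induction n with
  | zero => simp [partialThetaSum_zero, durfeeSum_zero, qPochhammer_zero]
  | succ n ih =>
    have hn_pred := qPochhammer_ne_zero_of_le hn n.le_succ
    have h_theta := partialThetaSum_succ_eq_sub x n 1
    have h_theta_diff := partialThetaSum_q_difference hn_pred 1
    have h_durfee := durfeeSum_succ hn 1
    have h_factor := one_sub_pow_ne_zero_of_qPochhammer_self_ne_zero hn le_rfl
    rw [mul_one] at h_theta h_theta_diff h_durfee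
    have h_rec : partialThetaSum x (n + 1) 1 =
        1 / qPochhammer x x (n + 1) - 1 / qPochhammer x x n +
          (1 - x ^ (n + 1)) * partialThetaSum x n 1 := by
      linear_combination h_theta - h_theta_diff
    rw [h_rec, ih hn_pred, h_durfee, durfeeSum_one hx hn, qPochhammer_self_succ]
    field_simp
    ring

theorem partialThetaSum_one_sub_mul_eq (hx : x ≠ 0) (hn : qPochhammer x x n ≠ 0) :
    partialThetaSum x n 1 - x * partialThetaSum x n x =
      (1 - x) * (qPochhammer x x n * durfeeSum x n (x ^ 2)) := by
  have h_theta := partialThetaSum_q_difference hn 1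
  have h_durfee := durfeeSum_q_difference hn 1
  have h_one : qPochhammer x x n * durfeeSum x n 1 = 1 / qPochhammer x x n := by
    rw [durfeeSum_one hx hn]
    field_simp
  rw [mul_one] at h_theta
  rw [mul_one, mul_one] at h_durfee
  linear_combination -h_theta + (2 - x ^ (n + 1)) * partialThetaSum_one_eq hx hn -
    qPochhammer x x n * h_durfee + h_one

theorem sum_Icc_one_succ_eq_sum_antidiagonal {M : Type*} [AddCommMonoid M] (f : ℕ → M) (n : ℕ) :
    ∑ k ∈ Icc 1 (n + 1), f k = ∑ p ∈ antidiagonal n, f (p.1 + 1) := by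
  rw [Nat.sum_antidiagonal_eq_sum_range_succ_mk, range_eq_Ico, sum_Ico_add' f 0 (n + 1) 1]
  rfl

theorem zpow_mul_zpow_eq_zpow_neg_two_pow {q : K} (hq : q ≠ 0) (k d : ℕ) :
    q ^ (-(2 * ((k + 1 : ℕ) : ℤ) ^ 2) - (k + 1 : ℕ)) *
        q ^ (-((k + d + 1 : ℕ) : ℤ) + (k + 1 : ℕ)) =
      (q ^ (-2 : ℤ)) ^ k ^ 2 * ((q ^ (-2 : ℤ)) ^ 2) ^ k / q ^ (k + d + 3) := by
  simp only [← zpow_natCast, ← zpow_mul, ← zpow_add₀ hq, ← zpow_sub₀ hq]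
  congr 1
  push_cast
  ring

theorem zpow_mul_one_sub_pow_eq_zpow_neg_two_pow {q : K} (hq : q ≠ 0) (i : ℕ) :
    q ^ (-((i + 1 : ℕ) : ℤ) * ((i + 1 : ℕ) + 1)) * (1 - q ^ (2 * (i + 1))) =
      -((q ^ (-2 : ℤ)) ^ (i + 1).choose 2 * (1 - (q ^ (-2 : ℤ)) ^ (i + 1))) := by
  have h_choose : ((i + 1).choose 2 * 2 : ℤ) = (i + 1) * i := by
    exact_mod_cast (Nat.add_one_mul_choose_eq i 1).symm.trans (by rw [Nat.choose_one_right])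
  have h_split : q ^ (-((i + 1 : ℕ) : ℤ) * ((i + 1 : ℕ) + 1)) =
      (q ^ (-2 : ℤ)) ^ (i + 1).choose 2 * (q ^ (-2 : ℤ)) ^ (i + 1) := by
    simp only [← zpow_natCast, ← zpow_mul, ← zpow_add₀ hq]
    congr 1
    push_cast
    linear_combination h_choose
  have h_cancel : (q ^ (-2 : ℤ)) ^ (i + 1) * q ^ (2 * (i + 1)) = 1 := by
    rw [pow_mul, ← mul_pow, zpow_neg, zpow_ofNat, inv_mul_cancel₀ (pow_ne_zero 2 hq), one_pow]
  rw [h_split]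
  linear_combination -(q ^ (-2 : ℤ)) ^ (i + 1).choose 2 * h_cancel

theorem sum_Icc_eq_mul_durfeeSum {q : K} (hq : q ≠ 0) (hx : q ^ (-2 : ℤ) = x)
    (hn : qPochhammer x x n ≠ 0) :
    ∑ k ∈ Icc 1 (n + 1),
        (1 - q) * q ^ (-(2 * (k : ℤ) ^ 2) - k) / qPochhammer x x (k - 1) *
          (qPochhammer (q ^ (-(2 * (k : ℤ)))) x (n + 1 - k) / qPochhammer x x (n + 1 - k)) *
          q ^ (-((n + 1 : ℕ) : ℤ) + k) =
      (1 - q) / q ^ (n + 3) * (qPochhammer x x n * durfeeSum x n (x ^ 2)) := by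
  rw [sum_Icc_one_succ_eq_sum_antidiagonal, durfeeSum, mul_sum, mul_sum]
  refine sum_congr rfl fun p hp ↦ ?_
  obtain ⟨k, d⟩ := p
  obtain rfl : k + d = n := mem_antidiagonal.1 hp
  have h_base : q ^ (-(2 * ((k + 1 : ℕ) : ℤ))) = x * x ^ k := by
    rw [← pow_succ', ← hx, ← zpow_natCast, ← zpow_mul, neg_mul]
  have h_pow := zpow_mul_zpow_eq_zpow_neg_two_pow hq k d
  have hk : qPochhammer x x k ≠ 0 := qPochhammer_ne_zero_of_le hn (Nat.le_add_right k d)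
  rw [hx] at h_pow
  simp only [add_tsub_cancel_right, Nat.add_sub_add_right, add_tsub_cancel_left]
  rw [mul_right_comm, mul_div_right_comm, mul_assoc _ _ (q ^ _), h_pow, h_base, qPochhammer_add]
  field_simp

theorem sum_Icc_eq_partialThetaSum {q : K} (hq : q ≠ 0) (hx : q ^ (-2 : ℤ) = x) (n : ℕ) :
    ∑ i ∈ Icc 1 (n + 1),
        (-1 : K) ^ (i - 1) * q ^ (-(i : ℤ) * (i + 1)) * (1 - q ^ (2 * i)) /
          qPochhammer x x (n + 1 - i) =
      -(partialThetaSum x n 1 - x * partialThetaSum x n x) := by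
  rw [sum_Icc_one_succ_eq_sum_antidiagonal, partialThetaSum, partialThetaSum, mul_sum,
    ← sum_sub_distrib, ← sum_neg_distrib]
  refine sum_congr rfl fun p hp ↦ ?_
  have h_sub : n + 1 - (p.1 + 1) = p.2 := by have := mem_antidiagonal.1 hp; lia
  rw [add_tsub_cancel_right, h_sub, mul_assoc, zpow_mul_one_sub_pow_eq_zpow_neg_two_pow hq, hx]
  ring

theorem anzanello_a2_alt_sum_general {q : K} (hq0 : q ≠ 0) (hq1 : q ≠ -1) (m : ℕ)
    (hq : ∀ k ∈ Ioo 0 m, q ^ (2 * k) ≠ 1) :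
    ∑ k ∈ Icc 1 m,
      (1 - q) * q ^ (-(2 * (k : ℤ) ^ 2) - k) / qPochhammer (q ^ (-2 : ℤ)) (q ^ (-2 : ℤ)) (k - 1)
        * (qPochhammer (q ^ (-(2 * (k : ℤ)))) (q ^ (-2 : ℤ)) (m - k)
            / qPochhammer (q ^ (-2 : ℤ)) (q ^ (-2 : ℤ)) (m - k))
        * q ^ (-(m : ℤ) + k)
    = 1 / (q ^ m * (1 + q)) * ∑ i ∈ Icc 1 m,
        (-1 : K) ^ (i - 1) * q ^ (-(i : ℤ) * (i + 1)) * (1 - q ^ (2 * i))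
          / qPochhammer (q ^ (-2 : ℤ)) (q ^ (-2 : ℤ)) (m - i) := by
  obtain _ | n := m
  · simp
  have hn : qPochhammer (q ^ (-2 : ℤ)) (q ^ (-2 : ℤ)) n ≠ 0 := by
    refine qPochhammer_self_ne_zero fun k hk h_one ↦ hq k (by simpa [Nat.lt_succ_iff] using hk) ?_
    rwa [zpow_neg, zpow_ofNat, inv_pow, inv_eq_one, ← pow_mul] at h_one
  have h_one_sub : 1 - q ^ (-2 : ℤ) = (q - 1) * (1 + q) / q ^ 2 := by
    rw [zpow_neg, zpow_ofNat]
    field_simp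
    ring
  have h_one_add : 1 + q ≠ 0 := fun h ↦ hq1 (eq_neg_of_add_eq_zero_right h)
  rw [sum_Icc_eq_mul_durfeeSum hq0 rfl hn, sum_Icc_eq_partialThetaSum hq0 rfl,
    partialThetaSum_one_sub_mul_eq (zpow_ne_zero _ hq0) hn, h_one_sub]
  field_simp
  ring

end Field

theorem anzanello_a2_alt_sum (q : ℝ) (hq : 1 < q) (m : ℕ) (hm : 1 ≤ m) :
    ∑ k ∈ Finset.Icc 1 m,
      (1 - q) * q ^ (-(2 * (k : ℤ) ^ 2) - k) / qPoch (q ^ (-2 : ℤ)) (q ^ (-2 : ℤ)) (k - 1)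
        * (qPoch (q ^ (-(2 * (k : ℤ)))) (q ^ (-2 : ℤ)) (m - k)
            / qPoch (q ^ (-2 : ℤ)) (q ^ (-2 : ℤ)) (m - k))
        * q ^ (-(m : ℤ) + k)
    = 1 / (q ^ m * (1 + q)) * ∑ i ∈ Finset.Icc 1 m,
        (-1 : ℝ) ^ (i - 1) * q ^ (-(i : ℤ) * (i + 1)) * (1 - q ^ (2 * i))
          / qPoch (q ^ (-2 : ℤ)) (q ^ (-2 : ℤ)) (m - i) :=
  anzanello_a2_alt_sum_general (by positivity) (by linarith) m fun k hk ↦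
    (one_lt_pow₀ hq (by have := mem_Ioo.1 hk; lia)).ne'
end
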